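/- For every positive integer n, b(n) = Σ_{m=1}^{n} Q_d(n−m) · E(m), where E(m) is the number of even divisors of m. -/

import Mathlib

/-!
Both totals are counted part by part. Let `A d n` and `D d n` be the number of occurrences of
the part `d` in all odd, respectively distinct, partitions of `n`. Removing one copy of `d` from
a partition that contains it gives, for `1 ≤ d ≤ n`,

* `A d n = #(odds (n - d)) + A d (n - d)` when `d` is odd (and `A d n = 0` when `d` is even),
* `D d n = #(distincts (n - d)) - D d (n - d)`, since a partition of `n - d` into distinct parts
  arises from one of `n` exactly when it does not already contain `d`.

Iterating, `A d n = ∑_{k ≥ 1} #(odds (n - k d))` and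
`D d n = ∑_{k ≥ 1} (-1) ^ (k - 1) #(distincts (n - k d))` (`eq_sum_of_recurrence`). By Euler's
theorem both cardinalities are `Qd`, so after summing over `d` the coefficient of `Qd (n - m)` in
`b n` is the number of odd divisors of `m` minus `∑_{k ∣ m} (-1) ^ (k - 1)`, which is the number of
even divisors of `m` (`divisor_identity`).
-/

open Nat Finset

/-- Total number of parts (with multiplicity) in all partitions of `n` into odd parts. -/
def oddPartsTotal (n : ℕ) : ℕ :=
  ∑ p ∈ Nat.Partition.odds n, Multiset.card p.parts

/-- Total number of parts (with multiplicity) in all partitions of `n` into distinct parts. -/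
def distinctPartsTotal (n : ℕ) : ℕ :=
  ∑ p ∈ Nat.Partition.distincts n, Multiset.card p.parts

/-- `b n` : number of parts in odd partitions of `n` minus number of parts in distinct
partitions of `n`; zero for negative arguments. -/
def b (n : ℤ) : ℤ :=
  if 0 ≤ n then (oddPartsTotal n.toNat : ℤ) - (distinctPartsTotal n.toNat : ℤ) else 0

/-- `s n` : number of parts in partitions of `n` into an odd number of distinct parts minus
the number of parts in partitions of `n` into an even number of distinct parts. -/
def s (n : ℕ) : ℤ :=
  ∑ p ∈ Nat.Partition.distincts n,
    (if Odd (Multiset.card p.parts) then (Multiset.card p.parts : ℤ)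
     else -(Multiset.card p.parts : ℤ))

/-- Total number of parts in all partitions of `n`. -/
def SN (n : ℕ) : ℕ := ∑ p : Nat.Partition n, Multiset.card p.parts

/-- `S` extended to the integers: `0` unless the argument is a positive integer. -/
def S (n : ℤ) : ℤ := if 0 < n then (SN n.toNat : ℤ) else 0

/-- The partition function `p(n)`. -/
def pN (n : ℕ) : ℕ := Fintype.card (Nat.Partition n)

/-- The partition function extended by `0` on negative integers. -/
def pZ (n : ℤ) : ℤ := if 0 ≤ n then (pN n.toNat : ℤ) else 0

/-- Number of partitions of `n` into distinct parts. -/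
def Qd (n : ℕ) : ℕ := (Nat.Partition.distincts n).card

/-- `M k n` : number of partitions of `n` in which `k` is the least positive integer that is
not a part and there are more parts greater than `k` than parts smaller than `k`. -/
def M (k n : ℕ) : ℕ :=
  Finset.card (Finset.univ.filter (fun p : Nat.Partition n =>
    k ∉ p.parts ∧ (∀ j < k, 0 < j → j ∈ p.parts) ∧
      Multiset.card (p.parts.filter (fun x => x < k)) <
        Multiset.card (p.parts.filter (fun x => k < x))))

/-- `MP k n` : number of partitions of `n` whose largest part is greater than `2k-1`, is odd
and appears exactly `k` times, while every other odd part appears at most once. -/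
def MP (k n : ℕ) : ℕ :=
  Finset.card (Finset.univ.filter (fun p : Nat.Partition n =>
    2 * k - 1 < p.parts.sup ∧ Odd p.parts.sup ∧ p.parts.count p.parts.sup = k ∧
      ∀ x ∈ p.parts, x ≠ p.parts.sup → Odd x → p.parts.count x ≤ 1))

/-- `e n` : number of partitions of `n` in which every even part occurs an even number of
times (OEIS A006950). -/
def e (n : ℕ) : ℕ :=
  Finset.card (Finset.univ.filter (fun p : Nat.Partition n =>
    ∀ x ∈ p.parts, Even x → Even (p.parts.count x)))

/-- Adding the part `d` identifies the partitions of `n - d` with the partitions of `n` that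
contain `d`; this is the corresponding change of variables for a sum over partitions whose
summand vanishes at the partitions not containing `d`. -/
lemma sum_partition_eq_sum_cons {n d : ℕ} (hd : 1 ≤ d) (hdn : d ≤ n) (w : Multiset ℕ → ℤ)
    (hw : ∀ l, d ∉ l → w l = 0) :
    ∑ p : Nat.Partition n, w p.parts = ∑ q : Nat.Partition (n - d), w (d ::ₘ q.parts) := by
  classical
  have h1 : ∑ p : Nat.Partition n, w p.parts
      = ∑ p ∈ (Finset.univ : Finset (Nat.Partition n)) with d ∈ p.parts, w p.parts := by
    rw [Finset.sum_filter]
    refine Finset.sum_congr rfl fun p _ => ?_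
    split_ifs with h
    · rfl
    · exact hw _ h
  rw [h1, Finset.sum_subtype (p := fun p : Nat.Partition n => d ∈ p.parts) _ (by simp),
    ← Equiv.sum_comp (Nat.Partition.partitionWithPartEquiv hd hdn).symm]
  simp

/-- The number of occurrences of the part `d` in all partitions of `n` into odd parts. -/
def oddPartCount (d n : ℕ) : ℤ := ∑ p ∈ Nat.Partition.odds n, (p.parts.count d : ℤ)

/-- The number of occurrences of the part `d` in all partitions of `n` into distinct parts. -/
def distinctPartCount (d n : ℕ) : ℤ := ∑ p ∈ Nat.Partition.distincts n, (p.parts.count d : ℤ)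

lemma count_eq_zero_of_gt {n d : ℕ} (h : n < d) (p : Nat.Partition n) :
    p.parts.count d = 0 :=
  Multiset.count_eq_zero.2 fun hm => absurd (p.le_of_mem_parts hm) (by omega)

lemma oddPartCount_of_gt {n d : ℕ} (h : n < d) : oddPartCount d n = 0 := by
  simp [oddPartCount, count_eq_zero_of_gt h]

lemma distinctPartCount_of_gt {n d : ℕ} (h : n < d) : distinctPartCount d n = 0 := by
  simp [distinctPartCount, count_eq_zero_of_gt h]

lemma oddPartCount_of_even {d : ℕ} (h : Even d) (n : ℕ) : oddPartCount d n = 0 := by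
  refine Finset.sum_eq_zero fun p hp => ?_
  simp only [Nat.Partition.odds, Nat.Partition.restricted, Finset.mem_filter] at hp
  exact_mod_cast Multiset.count_eq_zero.2 fun hm => hp.2 d hm h

lemma oddPartCount_rec {n d : ℕ} (hodd : ¬ Even d) (hd : 1 ≤ d) (hdn : d ≤ n) :
    oddPartCount d n = Qd (n - d) + oddPartCount d (n - d) := by
  classical
  have hQ : (Qd (n - d) : ℤ) = ∑ p ∈ Nat.Partition.odds (n - d), (1 : ℤ) := by
    simp [Qd, Nat.Partition.card_odds_eq_card_distincts]
  rw [hQ]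
  unfold oddPartCount Nat.Partition.odds Nat.Partition.restricted
  rw [← Finset.sum_add_distrib, Finset.sum_filter, Finset.sum_filter,
    sum_partition_eq_sum_cons hd hdn
      (fun l => if ∀ i ∈ l, ¬ Even i then (l.count d : ℤ) else 0)
      (fun l hl => by simp [Multiset.count_eq_zero.2 hl])]
  refine Finset.sum_congr rfl fun q _ => ?_
  simp only [Multiset.forall_mem_cons, hodd, not_false_eq_true, true_and,
    Multiset.count_cons_self]
  split_ifs
  · push_cast; ring
  · rfl

lemma distinctPartCount_rec {n d : ℕ} (hd : 1 ≤ d) (hdn : d ≤ n) :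
    distinctPartCount d n = Qd (n - d) - distinctPartCount d (n - d) := by
  classical
  have hQ : (Qd (n - d) : ℤ) = ∑ p ∈ Nat.Partition.distincts (n - d), (1 : ℤ) := by
    simp [Qd]
  rw [hQ]
  unfold distinctPartCount Nat.Partition.distincts
  rw [← Finset.sum_sub_distrib, Finset.sum_filter, Finset.sum_filter,
    sum_partition_eq_sum_cons hd hdn
      (fun l => if l.Nodup then (l.count d : ℤ) else 0)
      (fun l hl => by simp [Multiset.count_eq_zero.2 hl])]
  refine Finset.sum_congr rfl fun q _ => ?_
  simp only [Multiset.nodup_cons, Multiset.count_cons_self]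
  by_cases hq : q.parts.Nodup
  · by_cases hm : d ∈ q.parts
    · simp [hq, hm]
    · simp [hq, hm]
  · simp [hq]

/-- The recurrence `f n = g (n - d) + ε f (n - d)` unrolls to
`f n = ∑_{k ≥ 1} ε ^ (k - 1) g (n - k d)`, here indexed by the multiples `m = k d` of `d`. -/
lemma eq_sum_of_recurrence (f g : ℕ → ℤ) (ε : ℤ) {d : ℕ} (hd : 1 ≤ d)
    (h0 : ∀ n, n < d → f n = 0) (hrec : ∀ n, d ≤ n → f n = g (n - d) + ε * f (n - d)) (n : ℕ) :
    f n = ∑ m ∈ Finset.Icc 1 n, if d ∣ m then ε ^ (m / d - 1) * g (n - m) else 0 := by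
  induction n using Nat.strong_induction_on with
  | _ n ih =>
    rcases lt_or_ge n d with hlt | hle
    · rw [h0 n hlt, Finset.sum_eq_zero]
      intro m hm
      rw [Finset.mem_Icc] at hm
      rw [if_neg fun hdm => absurd (Nat.le_of_dvd hm.1 hdm) (by omega)]
    · obtain ⟨r, rfl⟩ := Nat.exists_eq_add_of_le' hle
      rw [hrec _ hle, Nat.add_sub_cancel, ih r (by omega)]
      have hIcc : ∀ k, Finset.Icc 1 k = Finset.Ico 1 (k + 1) := fun k => by
        ext; simp only [Finset.mem_Icc, Finset.mem_Ico]; omega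
      rw [hIcc, hIcc, ← Finset.sum_Ico_consecutive _ hd (by omega : d ≤ r + d + 1),
        Finset.sum_eq_sum_Ico_succ_bot (by omega : d < r + d + 1)]
      have hlow : ∑ m ∈ Finset.Ico 1 d,
          (if d ∣ m then ε ^ (m / d - 1) * g (r + d - m) else 0) = 0 := by
        refine Finset.sum_eq_zero fun m hm => ?_
        rw [Finset.mem_Ico] at hm
        rw [if_neg fun hdm => absurd (Nat.le_of_dvd hm.1 hdm) (by omega)]
      rw [hlow, zero_add, if_pos dvd_rfl, Nat.div_self hd, Nat.add_sub_cancel,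
        show d + 1 = 1 + d by omega, show r + d + 1 = (r + 1) + d by omega,
        ← Finset.sum_Ico_add', Finset.mul_sum]
      simp only [Nat.sub_self, pow_zero, one_mul]
      congr 1
      refine Finset.sum_congr rfl fun m hm => ?_
      rw [Finset.mem_Ico] at hm
      simp only [Nat.dvd_add_self_right]
      rw [Nat.add_div_right _ hd, Nat.add_sub_add_right r d m]
      split_ifs with hdm
      · have : 1 ≤ m / d := (Nat.one_le_div_iff hd).2 (Nat.le_of_dvd hm.1 hdm)
        obtain ⟨k, hk⟩ := Nat.exists_eq_add_of_le' this
        rw [hk, Nat.succ_sub_one, Nat.add_sub_cancel, pow_succ]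
        ring
      · simp

lemma divisor_identity (m : ℕ) :
    ∑ d ∈ m.divisors, ((if Even d then 0 else 1) - (-1 : ℤ) ^ (m / d - 1))
      = ((m.divisors.filter (fun d => Even d)).card : ℤ) := by
  rw [Finset.sum_sub_distrib, Nat.sum_div_divisors m (fun k => (-1 : ℤ) ^ (k - 1)),
    ← Finset.sum_sub_distrib, Finset.card_filter]
  push_cast
  refine Finset.sum_congr rfl fun d hd => ?_
  have hpos : 1 ≤ d := Nat.pos_of_mem_divisors hd
  split_ifs with h
  · rw [Odd.neg_one_pow (Nat.Even.sub_odd hpos h odd_one)]; rfl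
  · rw [Even.neg_one_pow (Nat.Odd.sub_odd (Nat.not_even_iff_odd.1 h) odd_one)]; rfl

lemma card_parts_eq_sum_count {n : ℕ} (p : Nat.Partition n) :
    (Multiset.card p.parts : ℤ) = ∑ d ∈ Finset.Icc 1 n, (p.parts.count d : ℤ) := by
  rw [← Multiset.sum_count_eq_card (s := Finset.Icc 1 n)]
  · push_cast; rfl
  · exact fun a ha => Finset.mem_Icc.2 ⟨p.parts_pos ha, p.le_of_mem_parts ha⟩

lemma oddPartsTotal_eq (n : ℕ) :
    (oddPartsTotal n : ℤ) = ∑ d ∈ Finset.Icc 1 n, oddPartCount d n := by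
  unfold oddPartsTotal oddPartCount
  push_cast
  rw [Finset.sum_comm]
  exact Finset.sum_congr rfl fun p _ => card_parts_eq_sum_count p

lemma distinctPartsTotal_eq (n : ℕ) :
    (distinctPartsTotal n : ℤ) = ∑ d ∈ Finset.Icc 1 n, distinctPartCount d n := by
  unfold distinctPartsTotal distinctPartCount
  push_cast
  rw [Finset.sum_comm]
  exact Finset.sum_congr rfl fun p _ => card_parts_eq_sum_count p

lemma oddPartCount_sub_distinctPartCount {d : ℕ} (hd : 1 ≤ d) (n : ℕ) :
    oddPartCount d n - distinctPartCount d n = ∑ m ∈ Finset.Icc 1 n,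
      if d ∣ m then (Qd (n - m) : ℤ) * ((if Even d then 0 else 1) - (-1 : ℤ) ^ (m / d - 1))
      else 0 := by
  have hD := eq_sum_of_recurrence (distinctPartCount d) (fun k => (Qd k : ℤ)) (-1) hd
    (fun _ h => distinctPartCount_of_gt h)
    (fun _ h => by rw [distinctPartCount_rec hd h]; ring) n
  have hA : oddPartCount d n = ∑ m ∈ Finset.Icc 1 n,
      if d ∣ m then (if Even d then 0 else 1) * (Qd (n - m) : ℤ) else 0 := by
    by_cases he : Even d
    · simp [oddPartCount_of_even he, he]
    · have := eq_sum_of_recurrence (oddPartCount d) (fun k => (Qd k : ℤ)) 1 hd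
        (fun _ h => oddPartCount_of_gt h)
        (fun _ h => by rw [oddPartCount_rec he hd h]; ring) n
      simpa [he] using this
  rw [hA, hD, ← Finset.sum_sub_distrib]
  refine Finset.sum_congr rfl fun m _ => ?_
  split_ifs <;> ring

/-- `b n = ∑_{m=1}^{n} Q_d(n-m) · E(m)` where `E m` is the number of even divisors of `m`. -/
theorem statement3 (n : ℕ) (hn : 0 < n) :
    b n = ∑ m ∈ Finset.Icc 1 n,
      (Qd (n - m) : ℤ) * ((m.divisors.filter (fun d => Even d)).card : ℤ) := by
  rw [b, if_pos (Int.natCast_nonneg n), Int.toNat_natCast, oddPartsTotal_eq,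
    distinctPartsTotal_eq, ← Finset.sum_sub_distrib,
    Finset.sum_congr rfl fun d hd =>
      oddPartCount_sub_distinctPartCount (Finset.mem_Icc.1 hd).1 n, Finset.sum_comm]
  refine Finset.sum_congr rfl fun m hm => ?_
  rw [Finset.mem_Icc] at hm
  have hdiv : (Finset.Icc 1 n).filter (fun d => d ∣ m) = m.divisors := by
    ext d
    simp only [Finset.mem_filter, Finset.mem_Icc, Nat.mem_divisors]
    refine ⟨fun h => ⟨h.2, by omega⟩, fun h => ?_⟩
    exact ⟨⟨Nat.pos_of_dvd_of_pos h.1 hm.1, (Nat.le_of_dvd hm.1 h.1).trans hm.2⟩, h.1⟩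
  rw [← Finset.sum_filter, hdiv, ← Finset.mul_sum, divisor_identity]
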